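/- arXiv:0805.3522 — 2 statements merged into one kernel-verified Lean document; each statement's English description precedes it below -/
import Mathlib

section
/- Let S and T be finite subsets of an abelian group G with 0 ∈ S ∩ T, |S| ≥ 2, S + T aperiodic, and |S + T| = |S| + |T| - 1. If T is not contained in the subgroup M = ⟨S⟩ generated by S, then T is M-quasi-periodic: that is, there exists x ∈ G such that (T \ (x + M)) + M = T \ (x + M). -/
open scoped Pointwise

/-- A finite set is aperiodic if its period `{g : A + g = A}` is trivial. -/
def IsAperiodic {G : Type*} [AddCommGroup G] [DecidableEq G] (A : Finset G) : Prop :=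
  ∀ g : G, A + ({g} : Finset G) = A → g = 0

/-- `A` is `H`-quasi-periodic: there is `x` with `(A \ (x + H)) + H = A \ (x + H)`. -/
def QuasiPeriodic {G : Type*} [AddCommGroup G] (H A : Set G) : Prop :=
  ∃ x : G, (A \ ({x} + H)) + H = A \ ({x} + H)

/-!
The period of a finite set `A` is its stabilizer under translation. Put `M = ⟨S⟩` and cut `T` along
a coset `x + M` into `T₀ = T ∩ (x + M)` and `T₁ = T \ (x + M)`, where `x ∈ S + T` is chosen so that
`S + T₀ = (S + T) ∩ (x + M)` is not `M`-periodic; such a coset exists because `S + T` is aperiodic.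
The isoperimetric bound says that `|S + X| ≥ |X| + |S| / 2` unless `S + X` is `M`-periodic. If it
held for both pieces we would get `|S + T| ≥ |S| + |T|`, so `S + T₁` is `M`-periodic. Any period of
`S + T₀` lies in `M`, hence is a period of `S + T`: thus `S + T₀` is aperiodic, and Kneser's theorem
`|S + T₀| ≥ |S| + |T₀| - 1` leaves `|S + T₁| ≤ |T₁|`. Therefore `T₁ = S + T₁` is `M`-periodic.

Kneser's theorem itself holds in the form `|A| + |B| ≤ |A + B| + |Stab (A + B)|`: Dyson's transform
puts every element of `A + B` into some `C ⊆ A + B` with `|A| + |B| ≤ |C| + |Stab C|`, and the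
lower bound on `|C| + |Stab C|` is inherited by unions. The isoperimetric bound follows by applying
it to `S + U` and `X`, where `U` is the stabilizer of `S + X`.
-/

open Finset AddAction

section AddGroup

variable {G : Type*} [AddGroup G] {H : AddSubgroup G}

lemma card_le_natCard_of_coe_subset [Finite H] {A : Finset G} (hA : (A : Set G) ⊆ H) :
    #A ≤ Nat.card H := by
  rw [← Set.ncard_coe_finset]
  exact Set.ncard_le_ncard hA (Set.toFinite _)

lemma exists_finset_coe_eq_addSubgroup (H : AddSubgroup G) [Finite H] :
    ∃ U : Finset G, (U : Set G) = H ∧ #U = Nat.card H := by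
  obtain ⟨U, hU⟩ := (Set.toFinite (H : Set G)).exists_finset_coe
  exact ⟨U, hU, by rw [← Set.ncard_coe_finset, hU]; rfl⟩

variable [DecidableEq G] {A B S U : Finset G}

lemma finite_stabilizer (hA : A.Nonempty) : Finite (stabilizer G A) := by
  rw [← stabilizer_coe_finset]
  exact stabilizer_finite hA.to_set A.finite_toSet

lemma stabilizer_inf_le_stabilizer_union :
    stabilizer G A ⊓ stabilizer G B ≤ stabilizer G (A ∪ B) := by
  simpa only [← stabilizer_coe_finset, coe_union] using
    stabilizer_inf_stabilizer_le_stabilizer_union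

lemma two_mul_card_le_card_add_of_not_subset (hU : (U : Set G) = H) (h0 : 0 ∈ S)
    (hS : ¬ (S : Set G) ⊆ H) :
    2 * #U ≤ #(S + U) := by
  obtain ⟨s, hs, hsH⟩ := Set.not_subset.1 hS
  have hdisj : Disjoint U (s +ᵥ U) := by
    rw [disjoint_right]
    intro x hx hxU
    obtain ⟨u, hu, rfl⟩ := mem_vadd_finset.1 hx
    rw [← mem_coe, hU] at hu hxU
    exact hsH ((H.add_mem_cancel_right hu).1 hxU)
  calc 2 * #U = #(U ∪ (s +ᵥ U)) := by rw [card_union_of_disjoint hdisj, card_vadd_finset, two_mul]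
    _ ≤ #(S + U) :=
        card_le_card (union_subset (subset_add_right U h0) (vadd_finset_subset_add hs))

end AddGroup

section Aperiodic

variable {G : Type*} [AddCommGroup G] [DecidableEq G] {A B : Finset G}

lemma isAperiodic_iff_stabilizer_eq_bot : IsAperiodic A ↔ stabilizer G A = ⊥ := by
  simp only [IsAperiodic, AddSubgroup.eq_bot_iff_forall, mem_stabilizer_iff, add_comm A,
    singleton_add, vadd_finset_def, vadd_eq_add]

lemma IsAperiodic.of_union (h : IsAperiodic (A ∪ B)) (hAB : stabilizer G A ≤ stabilizer G B) :
    IsAperiodic A := by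
  rw [isAperiodic_iff_stabilizer_eq_bot] at h ⊢
  exact le_bot_iff.1 (h ▸ (le_inf le_rfl hAB).trans stabilizer_inf_le_stabilizer_union)

lemma IsAperiodic.not_closure_le_stabilizer {S : Finset G} (h : IsAperiodic A) (hS : 1 < #S) :
    ¬ AddSubgroup.closure (S : Set G) ≤ stabilizer G A := by
  obtain ⟨s, hs, hs0⟩ := exists_mem_ne hS 0
  rw [isAperiodic_iff_stabilizer_eq_bot.1 h]
  exact fun hle => hs0 (hle (AddSubgroup.subset_closure hs))

end Aperiodic

section Kneser

variable {G : Type*} [AddCommGroup G] [DecidableEq G] {A B C D P Q U V : Finset G} {a b c : G}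

lemma card_add_card_le_card_add_add_card_sub_inter_sub (hP : P.Nonempty) (hQ : Q.Nonempty) :
    #P + #Q ≤ #(P + Q) + #((P - P) ∩ (Q - Q)) := by
  obtain ⟨p₀, hp₀⟩ := hP
  obtain ⟨q₀, hq₀⟩ := hQ
  have union_subset_add : (q₀ +ᵥ P) ∪ (p₀ +ᵥ Q) ⊆ P + Q :=
    union_subset (by rw [add_comm]; exact vadd_finset_subset_add hq₀) (vadd_finset_subset_add hp₀)
  have inter_subset : (q₀ +ᵥ P) ∩ (p₀ +ᵥ Q) ⊆ (p₀ + q₀) +ᵥ ((P - P) ∩ (Q - Q)) := by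
    intro x hx
    simp only [mem_inter, ← neg_vadd_mem_iff, vadd_eq_add] at hx ⊢
    refine ⟨mem_sub.2 ⟨_, hx.1, p₀, hp₀, ?_⟩, mem_sub.2 ⟨_, hx.2, q₀, hq₀, ?_⟩⟩ <;> abel
  calc #P + #Q = #((q₀ +ᵥ P) ∪ (p₀ +ᵥ Q)) + #((q₀ +ᵥ P) ∩ (p₀ +ᵥ Q)) := by
        rw [card_union_add_card_inter, card_vadd_finset, card_vadd_finset]
    _ ≤ #(P + Q) + #((P - P) ∩ (Q - Q)) :=
        Nat.add_le_add (card_le_card union_subset_add)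
          ((card_le_card inter_subset).trans_eq (card_vadd_finset _ _))

-- `c + (u + v)` lies in `D` since `v` is a period of `D`, and outside `C` since `u` is one of `C`.
lemma card_filter_add_filter_le_card_sdiff (hU : (U : Set G) ⊆ stabilizer G C)
    (hV : (V : Set G) ⊆ stabilizer G D) (c : G) :
    #({u ∈ U | u + c ∈ D} + {v ∈ V | v + c ∉ C}) ≤ #(D \ C) := by
  rw [← card_vadd_finset c]
  refine card_le_card fun x hx => ?_
  obtain ⟨_, huv, rfl⟩ := mem_vadd_finset.1 hx
  obtain ⟨u, hu, v, hv, rfl⟩ := mem_add.1 huv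
  rw [mem_filter] at hu hv
  rw [mem_sdiff, vadd_eq_add]
  constructor
  · rw [show c + (u + v) = v +ᵥ (u + c) by rw [vadd_eq_add]; abel,
      mem_stabilizer_finset.1 (hV hv.1)]
    exact hu.2
  · rw [show c + (u + v) = u +ᵥ (v + c) by rw [vadd_eq_add]; abel,
      mem_stabilizer_finset.1 (hU hu.1)]
    exact hv.2

lemma card_filter_add_card_filter_le_card_sdiff_add (hC : C.Nonempty)
    (hU : (U : Set G) ⊆ stabilizer G C) (hV : (V : Set G) ⊆ stabilizer G D)
    (hUD : {u ∈ U | u + c ∈ D}.Nonempty) (hVC : {v ∈ V | v + c ∉ C}.Nonempty) :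
    #{u ∈ U | u + c ∈ D} + #{v ∈ V | v + c ∉ C} ≤
      #(D \ C) + Nat.card ↥(stabilizer G C ⊓ stabilizer G D) := by
  have := finite_stabilizer hC
  have : Finite ↥(stabilizer G C ⊓ stabilizer G D) :=
    Finite.of_injective _ (AddSubgroup.inclusion_injective inf_le_left)
  refine (card_add_card_le_card_add_add_card_sub_inter_sub hUD hVC).trans <|
    Nat.add_le_add (card_filter_add_filter_le_card_sdiff hU hV c) <|
    card_le_natCard_of_coe_subset fun x hx => ?_
  obtain ⟨hxU, hxV⟩ := mem_inter.1 hx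
  obtain ⟨u, hu, u', hu', rfl⟩ := mem_sub.1 hxU
  obtain ⟨v, hv, v', hv', hvu⟩ := mem_sub.1 hxV
  have huu' : u - u' ∈ stabilizer G C :=
    sub_mem (hU (mem_filter.1 hu).1) (hU (mem_filter.1 hu').1)
  have hvv' : v - v' ∈ stabilizer G D :=
    sub_mem (hV (mem_filter.1 hv).1) (hV (mem_filter.1 hv').1)
  exact ⟨huu', hvu ▸ hvv'⟩

lemma card_stabilizer_le_card_sdiff_add_card_stabilizer_inf (hC : C.Nonempty) (hD : D.Nonempty)
    (hCD : Nat.card (stabilizer G C) ≤ Nat.card (stabilizer G D)) (hDC : ¬ D ⊆ C) :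
    Nat.card (stabilizer G C) ≤
        #(D \ C) + Nat.card ↥(stabilizer G C ⊓ stabilizer G D) ∨
      Nat.card (stabilizer G D) ≤
        #(C \ D) + Nat.card ↥(stabilizer G C ⊓ stabilizer G D) := by
  obtain ⟨c, hcD, hcC⟩ := not_subset.1 hDC
  have := finite_stabilizer hC
  have := finite_stabilizer hD
  obtain ⟨U, hU, hUcard⟩ := exists_finset_coe_eq_addSubgroup (stabilizer G C)
  obtain ⟨V, hV, hVcard⟩ := exists_finset_coe_eq_addSubgroup (stabilizer G D)
  rw [← hUcard, ← hVcard] at hCD ⊢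
  have hUsplit := card_filter_add_card_filter_not (s := U) (· + c ∈ D)
  have hVsplit := card_filter_add_card_filter_not (s := V) (· + c ∈ C)
  have hUD : {u ∈ U | u + c ∈ D}.Nonempty :=
    ⟨0, mem_filter.2 ⟨by rw [← mem_coe, hU]; exact zero_mem _, by rwa [zero_add]⟩⟩
  have hVC : {v ∈ V | v + c ∉ C}.Nonempty :=
    ⟨0, mem_filter.2 ⟨by rw [← mem_coe, hV]; exact zero_mem _, by rwa [zero_add]⟩⟩
  have hDCcard := card_filter_add_card_filter_le_card_sdiff_add hC hU.subset hV.subset hUD hVC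
  rcases {u ∈ U | u + c ∉ D}.eq_empty_or_nonempty with hUD' | hUD'
  · rw [hUD', card_empty] at hUsplit
    omega
  rcases {v ∈ V | v + c ∈ C}.eq_empty_or_nonempty with hVC' | hVC'
  · have hle := card_filter_add_filter_le_card_sdiff hU.subset hV.subset c
    have := (card_le_card_add_left hUD).trans hle
    rw [hVC', card_empty] at hVsplit
    omega
  have hCDcard := card_filter_add_card_filter_le_card_sdiff_add hD hV.subset hU.subset hVC' hUD'
  rw [inf_comm] at hCDcard
  omega

lemma le_card_union_add_card_stabilizer {n : ℕ} (hC : C.Nonempty) (hD : D.Nonempty)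
    (hnC : n ≤ #C + Nat.card (stabilizer G C)) (hnD : n ≤ #D + Nat.card (stabilizer G D)) :
    n ≤ #(C ∪ D) + Nat.card (stabilizer G (C ∪ D)) := by
  wlog hCD : Nat.card (stabilizer G C) ≤ Nat.card (stabilizer G D) generalizing C D
  · rw [union_comm]
    exact this hD hC hnD hnC (le_of_not_ge hCD)
  by_cases hDC : D ⊆ C
  · rwa [union_eq_left.2 hDC]
  have := finite_stabilizer (hC.mono (subset_union_left (s₂ := D)))
  have hinf : Nat.card ↥(stabilizer G C ⊓ stabilizer G D) ≤ Nat.card (stabilizer G (C ∪ D)) :=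
    AddSubgroup.card_le_of_le stabilizer_inf_le_stabilizer_union
  have hunionC := card_sdiff_add_card D C
  have hunionD := card_sdiff_add_card C D
  rw [union_comm] at hunionC
  rcases card_stabilizer_le_card_sdiff_add_card_stabilizer_inf hC hD hCD hDC with h | h <;> omega

lemma exists_subset_add_card_add_card_le (ha : a ∈ A) (hb : b ∈ B) :
    ∃ C ⊆ A + B, a + b ∈ C ∧ #A + #B ≤ #C + Nat.card (stabilizer G C) := by
  induction B using Finset.strongInduction generalizing A with
  | H B ih =>
  -- Dyson's transform at `e - b` shrinks `B`, keeping `b`, unless `(e - b) +ᵥ B ⊆ A`; if no `e ∈ A`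
  -- shrinks `B`, then `B - b` consists of periods of `A`.
  by_cases h : ∀ e ∈ A, (e - b) +ᵥ B ⊆ A
  · have := finite_stabilizer ⟨a, ha⟩
    have hstab : ((-b +ᵥ B : Finset G) : Set G) ⊆ stabilizer G A := by
      intro x hx
      refine mem_stabilizer_finset'.2 fun e he => h e he ?_
      obtain ⟨y, hy, rfl⟩ := mem_vadd_finset.1 hx
      exact mem_vadd_finset.2 ⟨y, hy, by simp only [vadd_eq_add]; abel⟩
    refine ⟨b +ᵥ A, ?_, ?_, ?_⟩
    · rw [add_comm A]; exact vadd_finset_subset_add hb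
    · exact mem_vadd_finset.2 ⟨a, ha, add_comm b a⟩
    · rw [stabilizer_vadd_eq_right, card_vadd_finset, ← card_vadd_finset (-b) B]
      exact Nat.add_le_add_left (card_le_natCard_of_coe_subset hstab) _
  · push Not at h
    obtain ⟨e, he, hBA⟩ := h
    have hlt : (addDysonETransform (e - b) (A, B)).2 ⊂ B := by
      refine (inter_subset_left).ssubset_of_ne fun heq => hBA ?_
      have hsub : B ⊆ -(e - b) +ᵥ A := inter_eq_left.1 heq
      rwa [subset_vadd_finset_iff, neg_neg] at hsub
    have hb' : b ∈ (addDysonETransform (e - b) (A, B)).2 := by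
      simp only [addDysonETransform_snd, mem_inter, ← neg_vadd_mem_iff, neg_neg, vadd_eq_add,
        sub_add_cancel]
      exact ⟨hb, he⟩
    obtain ⟨C, hC, habC, hcard⟩ := ih _ hlt (mem_union_left _ ha) hb'
    exact ⟨C, hC.trans (addDysonETransform.subset _ (A, B)), habC,
      (addDysonETransform.card (e - b) (A, B)).symm.trans_le hcard⟩

theorem card_add_card_le_card_add_add_card_stabilizer (hA : A.Nonempty) (hB : B.Nonempty) :
    #A + #B ≤ #(A + B) + Nat.card (stabilizer G (A + B)) := by
  have exists_piece : ∀ x ∈ A + B, ∃ C ⊆ A + B, x ∈ C ∧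
      #A + #B ≤ #C + Nat.card (stabilizer G C) := by
    intro x hx
    obtain ⟨a, ha, b, hb, rfl⟩ := mem_add.1 hx
    exact exists_subset_add_card_add_card_le ha hb
  choose! C hC hxC hcard using exists_piece
  have hunion : (A + B).sup' (hA.add hB) C = A + B :=
    (sup'_le _ _ hC).antisymm fun x hx => le_sup' C hx (hxC x hx)
  rw [← hunion]
  refine (sup'_induction (p := fun D : Finset G => D.Nonempty ∧
    #A + #B ≤ #D + Nat.card (stabilizer G D)) _ _ ?_ fun x hx => ⟨⟨x, hxC x hx⟩, hcard x hx⟩).2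
  rintro D ⟨hD, hDcard⟩ E ⟨hE, hEcard⟩
  exact ⟨hD.mono subset_union_left, le_card_union_add_card_stabilizer hD hE hDcard hEcard⟩

theorem IsAperiodic.card_add_card_le (h : IsAperiodic (A + B)) (hA : A.Nonempty)
    (hB : B.Nonempty) : #A + #B ≤ #(A + B) + 1 := by
  simpa only [isAperiodic_iff_stabilizer_eq_bot.1 h, AddSubgroup.card_bot] using
    card_add_card_le_card_add_add_card_stabilizer hA hB

end Kneser

section Isoperimetry

variable {G : Type*} [AddCommGroup G] [DecidableEq G] {S X Y : Finset G}

theorem closure_le_stabilizer_add_or_card_le (h0 : 0 ∈ S) (X : Finset G) :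
    AddSubgroup.closure (S : Set G) ≤ stabilizer G (S + X) ∨
      2 * #X + #S ≤ 2 * #(S + X) := by
  rcases X.eq_empty_or_nonempty with rfl | hX
  · simp
  rw [AddSubgroup.closure_le, or_iff_not_imp_left]
  intro hS
  have := finite_stabilizer (Nonempty.add ⟨0, h0⟩ hX)
  obtain ⟨U, hU, hUcard⟩ := exists_finset_coe_eq_addSubgroup (stabilizer G (S + X))
  have h0U : 0 ∈ U := by rw [← mem_coe, hU]; exact zero_mem _
  have absorb : S + U + X = S + X := by
    rw [add_right_comm, ← coe_inj, coe_add, hU, ← stabilizer_coe_finset, add_stabilizer_self]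
  have hkneser := card_add_card_le_card_add_add_card_stabilizer (A := S + U)
    (Nonempty.add ⟨0, h0⟩ ⟨0, h0U⟩) hX
  rw [absorb, ← hUcard] at hkneser
  have hSU : #S ≤ #(S + U) := card_le_card_add_right ⟨0, h0U⟩
  have hU2 : 2 * #U ≤ #(S + U) := two_mul_card_le_card_add_of_not_subset hU h0 hS
  omega

lemma closure_le_stabilizer_add_of_card_add_card_lt (h0 : 0 ∈ S)
    (hcard : #(S + X) + #(S + Y) < #X + #Y + #S)
    (hX : ¬ AddSubgroup.closure (S : Set G) ≤ stabilizer G (S + X)) :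
    AddSubgroup.closure (S : Set G) ≤ stabilizer G (S + Y) := by
  have hXcard := (closure_le_stabilizer_add_or_card_le h0 X).resolve_left hX
  refine (closure_le_stabilizer_add_or_card_le h0 Y).resolve_right fun hYcard => ?_
  omega

lemma add_eq_right_of_isAperiodic_add (h0 : 0 ∈ S) (hX : X.Nonempty) (h : IsAperiodic (S + X))
    (hcard : #(S + X) + #(S + Y) < #X + #Y + #S) : S + Y = Y := by
  have hkneser := h.card_add_card_le ⟨0, h0⟩ hX
  exact (eq_of_subset_of_card_le (subset_add_right Y h0) (by omega)).symm

end Isoperimetry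

lemma add_filter_of_forall_iff {G : Type*} [Add G] [DecidableEq G] {S T : Finset G} {p : G → Prop}
    [DecidablePred p] (hp : ∀ s ∈ S, ∀ x, p (s + x) ↔ p x) :
    S + T.filter p = (S + T).filter p := by
  ext x
  simp only [mem_add, mem_filter]
  constructor
  · rintro ⟨s, hs, t, ⟨ht, hpt⟩, rfl⟩
    exact ⟨⟨s, hs, t, ht, rfl⟩, (hp s hs t).2 hpt⟩
  · rintro ⟨⟨s, hs, t, ht, rfl⟩, hpt⟩
    exact ⟨s, hs, t, ⟨ht, (hp s hs t).1 hpt⟩, rfl⟩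

section Coset

variable {G : Type*} [AddCommGroup G] {A T : Finset G} {M : AddSubgroup G} {x y m : G}

lemma mem_singleton_add_coe_iff : y ∈ {x} + (M : Set G) ↔ y - x ∈ M := by
  rw [Set.singleton_add, Set.image_add_left, Set.mem_preimage, SetLike.mem_coe, neg_add_eq_sub]

lemma self_mem_singleton_add_coe : x ∈ {x} + (M : Set G) :=
  mem_singleton_add_coe_iff.2 (by rw [sub_self]; exact zero_mem M)

lemma add_mem_singleton_add_coe_iff (hm : m ∈ M) :
    m + y ∈ {x} + (M : Set G) ↔ y ∈ {x} + (M : Set G) := by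
  rw [mem_singleton_add_coe_iff, mem_singleton_add_coe_iff, add_sub_assoc,
    M.add_mem_cancel_left hm]

variable [DecidableEq G]

lemma stabilizer_le_of_coe_subset (hA : A.Nonempty) (hAM : (A : Set G) ⊆ {x} + (M : Set G)) :
    stabilizer G A ≤ M := by
  intro g hg
  obtain ⟨a, ha⟩ := hA
  have hax : a - x ∈ M := mem_singleton_add_coe_iff.1 (hAM ha)
  have hgax : g + a - x ∈ M :=
    mem_singleton_add_coe_iff.1 (hAM ((mem_stabilizer_finset.1 hg a).2 ha))
  rwa [add_sub_assoc, M.add_mem_cancel_right hax] at hgax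

open scoped Classical in
lemma exists_not_le_stabilizer_filter (hA : ¬ M ≤ stabilizer G A) :
    ∃ x ∈ A, ¬ M ≤ stabilizer G {a ∈ A | a ∈ {x} + (M : Set G)} := by
  contrapose! hA
  intro m hm
  refine mem_stabilizer_finset'.2 fun x hx => ?_
  have hxx : x ∈ {a ∈ A | a ∈ {x} + (M : Set G)} :=
    mem_filter.2 ⟨hx, self_mem_singleton_add_coe⟩
  exact (mem_filter.1 ((mem_stabilizer_finset.1 (hA x hx hm) x).2 hxx)).1

open scoped Classical in
lemma IsAperiodic.filter_coset (h : IsAperiodic A)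
    (hne : {a ∈ A | a ∈ {x} + (M : Set G)}.Nonempty)
    (hM : M ≤ stabilizer G {a ∈ A | a ∉ {x} + (M : Set G)}) :
    IsAperiodic {a ∈ A | a ∈ {x} + (M : Set G)} := by
  rw [← filter_union_filter_not_eq (· ∈ {x} + (M : Set G)) A] at h
  have hle := stabilizer_le_of_coe_subset hne fun a ha => (mem_filter.1 ha).2
  exact h.of_union (hle.trans hM)

open scoped Classical in
lemma quasiPeriodic_of_le_stabilizer_filter
    (h : M ≤ stabilizer G {t ∈ T | t ∉ {x} + (M : Set G)}) :
    QuasiPeriodic (M : Set G) (T : Set G) := by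
  have hcoe : (T : Set G) \ ({x} + M) = ({t ∈ T | t ∉ {x} + (M : Set G)} : Finset G) :=
    (coe_filter _ _).symm
  refine ⟨x, ?_⟩
  rw [hcoe]
  refine Set.Subset.antisymm ?_ fun t ht => ⟨t, ht, 0, zero_mem M, add_zero t⟩
  rintro _ ⟨t, ht, m, hm, rfl⟩
  have hmt := (mem_stabilizer_finset.1 (h hm) t).2 ht
  rwa [vadd_eq_add, add_comm m t] at hmt

end Coset

theorem stmt7 {G : Type*} [AddCommGroup G] [DecidableEq G] (S T : Finset G)
    (h0S : (0 : G) ∈ S) (h0T : (0 : G) ∈ T) (hS2 : 2 ≤ S.card)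
    (hap : IsAperiodic (S + T))
    (hcard : (S + T).card + 1 = S.card + T.card)
    (hnot : ¬ (T : Set G) ⊆ (AddSubgroup.closure (S : Set G) : Set G)) :
    QuasiPeriodic ((AddSubgroup.closure (S : Set G) : AddSubgroup G) : Set G)
      (T : Set G) := by
  classical
  set M := AddSubgroup.closure (S : Set G)
  have hSM : ∀ s ∈ S, s ∈ M := fun s hs => AddSubgroup.subset_closure hs
  obtain ⟨x, hx, hMx⟩ := exists_not_le_stabilizer_filter (hap.not_closure_le_stabilizer hS2)
  set T₀ : Finset G := {t ∈ T | t ∈ {x} + (M : Set G)}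
  set T₁ : Finset G := {t ∈ T | t ∉ {x} + (M : Set G)} with hT₁
  have hST₀ : S + T₀ = {y ∈ S + T | y ∈ {x} + (M : Set G)} :=
    add_filter_of_forall_iff fun s hs _ => add_mem_singleton_add_coe_iff (hSM s hs)
  have hST₁ : S + T₁ = {y ∈ S + T | y ∉ {x} + (M : Set G)} :=
    add_filter_of_forall_iff fun s hs _ => (add_mem_singleton_add_coe_iff (hSM s hs)).not
  have card_lt : #(S + T₀) + #(S + T₁) < #T₀ + #T₁ + #S := by
    rw [hST₀, hST₁, card_filter_add_card_filter_not, card_filter_add_card_filter_not]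
    omega
  have periodic : M ≤ stabilizer G (S + T₁) :=
    closure_le_stabilizer_add_of_card_add_card_lt h0S card_lt (hST₀ ▸ hMx)
  have nonempty : (S + T₀).Nonempty :=
    ⟨x, hST₀ ▸ mem_filter.2 ⟨hx, self_mem_singleton_add_coe⟩⟩
  have aperiodic : IsAperiodic (S + T₀) :=
    hST₀ ▸ hap.filter_coset (hST₀ ▸ nonempty) (hST₁ ▸ periodic)
  rw [add_eq_right_of_isAperiodic_add h0S nonempty.of_add_right aperiodic card_lt, hT₁] at periodic
  exact quasiPeriodic_of_le_stabilizer_filter periodic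
end

section
/- Let S be a 2-separable finite subset of an abelian group G with 0 ∈ S, |S| ≤ (|G|+1)/2 and κ₂(S) ≤ |S| - 1. If S is not an arithmetic progression, then there is a subgroup H of G which is a 2-fragment of S. -/
open scoped Pointwise Classical

/-- The `k`-th connectivity `κ_k(S)`: minimum of `|X + S| - |X|` over finite `X`
with `|X| ≥ k` and `|X + S| ≤ |G| - k`, with `min ∅ = |G| - 2k + 1`. -/
noncomputable def kappa {G : Type*} [AddCommGroup G] [DecidableEq G]
    (k : ℕ) (S : Finset G) : ℕ :=
  if ∃ X : Finset G, k ≤ X.card ∧ (X + S).card ≤ Nat.card G - k then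
    sInf {d : ℕ | ∃ X : Finset G, k ≤ X.card ∧ (X + S).card ≤ Nat.card G - k ∧
      d = (X + S).card - X.card}
  else Nat.card G - 2 * k + 1

/-- `S` is `k`-separable: some `X` has `|X| ≥ k` and `|G \ (X + S)| ≥ k`. -/
def KSeparable {G : Type*} [AddCommGroup G] [DecidableEq G] (k : ℕ) (S : Finset G) : Prop :=
  ∃ X : Finset G, k ≤ X.card ∧ (X + S).card ≤ Nat.card G - k

/-- `X` is a `k`-fragment of `S`: `|X| ≥ k`, `|G \ (X + S)| ≥ k` and
`|X + S| - |X| = κ_k(S)`. -/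
def IsFragment {G : Type*} [AddCommGroup G] [DecidableEq G] (k : ℕ) (S X : Finset G) : Prop :=
  k ≤ X.card ∧ (X + S).card ≤ Nat.card G - k ∧ (X + S).card - X.card = kappa k S

/-- A hyper-atom of `S` is a subgroup of maximal cardinality which is a `1`-fragment. -/
def IsHyperAtom {G : Type*} [AddCommGroup G] [DecidableEq G]
    (S : Finset G) (H : AddSubgroup G) : Prop :=
  (∃ HF : Finset G, (HF : Set G) = (H : Set G) ∧ IsFragment 1 S HF) ∧
  ∀ (K : AddSubgroup G) (KF : Finset G), (KF : Set G) = (K : Set G) →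
    IsFragment 1 S KF → Nat.card K ≤ Nat.card H

/-- `A` is an arithmetic progression with difference `d`:
`A = {a, a + d, ..., a + (k-1)d}` with the listed elements pairwise distinct. -/
def IsAPWith {G : Type*} [AddCommGroup G] [DecidableEq G] (d : G) (A : Finset G) : Prop :=
  ∃ (a : G) (k : ℕ), A.card = k ∧
    A = (Finset.range k).image (fun i => a + (i : ℕ) • d)

/-!
Two distinct `2`-atoms of `S` share at most one element, so a `2`-atom `A` containing `0` is either
a subgroup or a Sidon set. A Sidon atom with at least three elements is impossible: inside a coset
of the subgroup `F` generated by `A`, sums with `A` obey a Vosper-type bound, whence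
`|F + S| ≤ |A + S| + 1` although `|F| ≥ |A| + 2`, so `|F + S| - |F| < κ₂(S)`. Finally, if
`A = {0, d}`, then `S` contains every coset of `⟨d⟩` that it meets, except possibly one. Either `S`
lies in that exceptional coset and is a progression, or `⟨d⟩` is itself a `2`-fragment.
-/

open Finset

section Fragments

variable {G : Type*} [AddCommGroup G] [DecidableEq G] {k : ℕ} {S X A B : Finset G}

theorem card_vadd_add (x : G) (X S : Finset G) : #((x +ᵥ X) + S) = #(X + S) := by
  rw [vadd_add_assoc, card_vadd_finset]

/-- `X` is one of the sets competing in the definition of `κ_k(S)`: `|X| ≥ k` and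
`|G \ (X + S)| ≥ k`, written without truncated subtraction. -/
def KSeparates (k : ℕ) (S X : Finset G) : Prop :=
  k ≤ #X ∧ #(X + S) + k ≤ Nat.card G

/-- A `k`-atom of `S`: a `k`-fragment of minimal cardinality. -/
def IsKAtom (k : ℕ) (S A : Finset G) : Prop :=
  IsFragment k S A ∧ ∀ X, IsFragment k S X → #A ≤ #X

theorem kSeparates_iff (hS : S.Nonempty) :
    KSeparates k S X ↔ k ≤ #X ∧ #(X + S) ≤ Nat.card G - k := by
  have hle : #X ≤ #(X + S) := card_le_card_add_right hS
  unfold KSeparates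
  omega

theorem KSeparates.card_add_kappa_le (hX : KSeparates k S X) (hS : S.Nonempty) :
    #X + kappa k S ≤ #(X + S) := by
  have hX' := (kSeparates_iff hS).1 hX
  have hle : #X ≤ #(X + S) := card_le_card_add_right hS
  have hkappa : kappa k S ≤ #(X + S) - #X := by
    rw [kappa, if_pos ⟨X, hX'⟩]
    exact Nat.sInf_le ⟨X, hX'.1, hX'.2, rfl⟩
  omega

theorem isFragment_iff (hS : S.Nonempty) :
    IsFragment k S X ↔ KSeparates k S X ∧ #(X + S) = #X + kappa k S := by
  have hle : #X ≤ #(X + S) := card_le_card_add_right hS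
  rw [kSeparates_iff hS, IsFragment, and_assoc]
  refine and_congr_right fun _ => and_congr_right fun _ => ?_
  omega

theorem KSeparates.isFragment (hX : KSeparates k S X) (hS : S.Nonempty)
    (hle : #(X + S) ≤ #X + kappa k S) : IsFragment k S X :=
  (isFragment_iff hS).2 ⟨hX, hle.antisymm (hX.card_add_kappa_le hS)⟩

theorem IsFragment.kSeparates (hX : IsFragment k S X) (hS : S.Nonempty) : KSeparates k S X :=
  ((isFragment_iff hS).1 hX).1

theorem IsFragment.card_add (hX : IsFragment k S X) (hS : S.Nonempty) :
    #(X + S) = #X + kappa k S :=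
  ((isFragment_iff hS).1 hX).2

theorem KSeparable.exists_isFragment (h : KSeparable k S) : ∃ X, IsFragment k S X := by
  obtain ⟨Y, hYk, hYS⟩ := h
  obtain ⟨X, hXk, hXS, hX⟩ := Nat.sInf_mem
    (s := {d : ℕ | ∃ X : Finset G, k ≤ #X ∧ #(X + S) ≤ Nat.card G - k ∧ d = #(X + S) - #X})
    ⟨_, Y, hYk, hYS, rfl⟩
  refine ⟨X, hXk, hXS, ?_⟩
  rw [kappa, if_pos ⟨Y, hYk, hYS⟩, ← hX]

theorem IsKAtom.vadd (hA : IsKAtom k S A) (x : G) : IsKAtom k S (x +ᵥ A) := by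
  unfold IsKAtom IsFragment at *
  simpa only [card_vadd_add, card_vadd_finset] using hA

theorem KSeparable.exists_isKAtom_zero_mem (hk : k ≠ 0) (h : KSeparable k S) :
    ∃ A, IsKAtom k S A ∧ (0 : G) ∈ A := by
  obtain ⟨A, hA, hmin⟩ := exists_minimalFor_of_wellFoundedLT (IsFragment k S) card
    h.exists_isFragment
  have hatom : IsKAtom k S A := ⟨hA, fun X hX => (le_total _ _).elim id (hmin hX)⟩
  obtain ⟨a, ha⟩ : A.Nonempty := card_pos.1 (hA.1.trans_lt' (Nat.pos_of_ne_zero hk))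
  exact ⟨-a +ᵥ A, hatom.vadd (-a), mem_vadd_finset.2 ⟨a, ha, neg_add_cancel a⟩⟩

theorem IsFragment.neg_compl_add [Fintype G] (hX : IsFragment k S X) (hS : S.Nonempty) :
    IsFragment k S (-(X + S)ᶜ) := by
  have hsep := hX.kSeparates hS
  have hcard := hX.card_add hS
  have hdual : #(-(X + S)ᶜ) + #(X + S) = Nat.card G := by
    rw [card_neg, Nat.card_eq_fintype_card, card_compl_add_card]
  have hdisj : Disjoint (-(X + S)ᶜ + S) (-X) := by
    rw [disjoint_left]
    intro y hy hyX
    obtain ⟨d, hd, s, hs, rfl⟩ := mem_add.1 hy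
    rw [mem_neg'] at hd hyX
    exact mem_compl.1 hd (by simpa using add_mem_add hyX hs)
  have hsum : #(-(X + S)ᶜ + S) + #X ≤ Nat.card G := by
    rw [← card_neg X, ← card_union_of_disjoint hdisj, Nat.card_eq_fintype_card]
    exact card_le_univ _
  have hsep' : KSeparates k S (-(X + S)ᶜ) := ⟨by have := hsep.2; omega, by have := hsep.1; omega⟩
  exact hsep'.isFragment hS (by omega)

theorem IsKAtom.card_add_card_add_le [Finite G] (hA : IsKAtom k S A) (hS : S.Nonempty) :
    #A + #(A + S) ≤ Nat.card G := by
  have := Fintype.ofFinite G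
  have hmin : #A ≤ #(-(A + S)ᶜ) := hA.2 _ (hA.1.neg_compl_add hS)
  rw [card_neg] at hmin
  rw [Nat.card_eq_fintype_card, ← card_compl_add_card (A + S)]
  exact Nat.add_le_add_right hmin _

-- Submodularity of `X ↦ |X + S|`: the union still `k`-separates by duality, so the intersection
-- is a fragment as well, and minimality applies to it.
theorem IsKAtom.eq_of_le_card_inter [Finite G] (hA : IsKAtom k S A) (hB : IsKAtom k S B)
    (hS : S.Nonempty) (hAB : k ≤ #(A ∩ B)) : A = B := by
  have hcard : #A = #B := (hA.2 B hB.1).antisymm (hB.2 A hA.1)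
  have hAS := hA.1.card_add hS
  have hBS := hB.1.card_add hS
  have hdual := hA.card_add_card_add_le hS
  have hsubmod : #(A ∪ B + S) + #(A ∩ B + S) ≤ #(A + S) + #(B + S) := by
    rw [union_add, ← card_union_add_card_inter (A + S)]
    exact Nat.add_le_add_left (card_le_card inter_add_subset) _
  have hunion := card_union_add_card_inter A B
  have hinter_le : #(A ∩ B + S) ≤ #(A + S) := card_le_card (add_subset_add_right inter_subset_left)
  have hinter : KSeparates k S (A ∩ B) :=
    ⟨hAB, (Nat.add_le_add_right hinter_le k).trans (hA.1.kSeparates hS).2⟩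
  have hinter_kappa := hinter.card_add_kappa_le hS
  have hunion_sep : KSeparates k S (A ∪ B) := ⟨by omega, by omega⟩
  have hunion_kappa := hunion_sep.card_add_kappa_le hS
  have hmin : #A ≤ #(A ∩ B) := hA.2 _ (hinter.isFragment hS (by omega))
  exact eq_of_subset_of_card_le (inter_eq_left.1 (eq_of_subset_of_card_le inter_subset_left hmin))
    hcard.ge

theorem IsKAtom.erase_add_eq {a : G} (hA : IsKAtom k S A) (hS : S.Nonempty) (hkA : k < #A)
    (ha : a ∈ A) : A.erase a + S = A + S := by
  have hsub : A.erase a + S ⊆ A + S := add_subset_add_right (erase_subset a A)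
  by_contra hne
  have hlt : #(A.erase a + S) < #(A + S) := card_lt_card (hsub.ssubset_of_ne hne)
  have hAS := hA.1.card_add hS
  have hsep := hA.1.kSeparates hS
  have herase : #(A.erase a) + 1 = #A := card_erase_add_one ha
  have hsep' : KSeparates k S (A.erase a) := ⟨by omega, by have := hsep.2; omega⟩
  have hmin : #A ≤ #(A.erase a) := hA.2 _ (hsep'.isFragment hS (by omega))
  omega

end Fragments

section Sidon

variable {G H : Type*} [AddCommGroup G] [DecidableEq G] [AddCommGroup H] [DecidableEq H]
  {S A B X : Finset G}

/-- Sidon sets: the nonzero differences `a - b` with `a, b ∈ A` are pairwise distinct. This is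
encoded by saying that two distinct translates of `A` share at most one element. -/
def IsSidon (A : Finset G) : Prop :=
  ∀ x y : G, x ≠ y → #((x +ᵥ A) ∩ (y +ᵥ A)) ≤ 1

theorem IsSidon.of_image {f : G →+ H} (hf : Function.Injective f) (hA : IsSidon (A.image f)) :
    IsSidon A := by
  intro x y hxy
  rw [← card_image_of_injective _ hf, image_inter _ _ hf]
  simpa only [image_vadd_distrib] using hA (f x) (f y) (hf.ne hxy)

theorem IsSidon.card_mul_card_le (hA : IsSidon A) (X : Finset G) :
    #X * #A ≤ #(X + A) + (#X).choose 2 := by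
  induction X using Finset.induction_on with
  | empty => simp
  | insert x X hx ih =>
    have hinter : #((X + A) ∩ (x +ᵥ A)) ≤ #X := by
      rw [← vadd_eq_add X, ← biUnion_vadd_finset, biUnion_inter]
      exact (card_biUnion_le_card_mul X _ 1 fun y hy => hA y x (by grind)).trans_eq (mul_one _)
    have hunion := card_union_add_card_inter (X + A) (x +ᵥ A)
    have hsum : insert x X + A = (X + A) ∪ (x +ᵥ A) := by
      rw [insert_eq, union_add, union_comm, singleton_add, ← image_vadd]
    rw [card_vadd_finset] at hunion
    have hchoose : (#X + 1).choose 2 = #X + (#X).choose 2 := by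
      rw [Nat.choose_succ_succ', Nat.choose_one_right]
    rw [hsum, card_insert_of_notMem hx, hchoose, add_mul]
    omega

theorem IsSidon.mul_card_le {k : ℕ} (hA : IsSidon A) (hX : k ≤ #X) :
    k * #A ≤ #(X + A) + k.choose 2 := by
  obtain ⟨Y, hYX, rfl⟩ := exists_subset_card_eq hX
  exact (hA.card_mul_card_le Y).trans
    (Nat.add_le_add_right (card_le_card (add_subset_add_right hYX)) _)

theorem IsSidon.card_lt_card_of_card_add_lt (hA : IsSidon A) (hA3 : 3 ≤ #A) (hB2 : 2 ≤ #B)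
    (hAB : #(B + A) < #B + #A) : #A < #B := by
  have htwo := hA.mul_card_le hB2
  rw [Nat.choose_self] at htwo
  have hB3 : 3 ≤ #B := by omega
  have hthree := hA.mul_card_le hB3
  rw [show Nat.choose 3 2 = 3 from rfl] at hthree
  omega

theorem IsKAtom.isSidon_or_exists_addSubgroup [Finite G] (hA : IsKAtom 2 S A) (hS : S.Nonempty)
    (h0 : (0 : G) ∈ A) : IsSidon A ∨ ∃ H : AddSubgroup G, (A : Set G) = H := by
  refine or_iff_not_imp_left.2 fun hnot => ⟨AddAction.stabilizer G A, ?_⟩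
  obtain ⟨x, y, hxy, hcard⟩ : ∃ x y : G, x ≠ y ∧ 2 ≤ #((x +ᵥ A) ∩ (y +ᵥ A)) := by
    simpa only [IsSidon, not_forall, not_le, exists_prop, Nat.succ_le_iff] using hnot
  have hstab : (-x + y) +ᵥ A = A := by
    rw [← vadd_vadd, ← (hA.vadd x).eq_of_le_card_inter (hA.vadd y) hS hcard, neg_vadd_vadd]
  have hmem : -x + y ∈ A := by
    rw [← hstab]
    simpa using vadd_mem_vadd_finset (a := -x + y) h0
  have hvadd : ∀ a ∈ A, a +ᵥ A = A := by
    intro a ha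
    refine (hA.vadd a).eq_of_le_card_inter hA hS ?_
    have hpair : {a, a + (-x + y)} ⊆ (a +ᵥ A) ∩ A := by
      refine subset_inter ?_ ?_ <;> simp only [insert_subset_iff, singleton_subset_iff]
      · exact ⟨by simpa using vadd_mem_vadd_finset (a := a) h0, vadd_mem_vadd_finset hmem⟩
      · refine ⟨ha, ?_⟩
        rw [← hstab, add_comm a, ← vadd_eq_add]
        exact vadd_mem_vadd_finset ha
    have hne : a ≠ a + (-x + y) := by
      rwa [Ne, left_eq_add, neg_add_eq_zero]
    exact (card_pair hne).symm.trans_le (card_le_card hpair)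
  ext a
  refine ⟨fun ha => hvadd a ha, fun ha => ?_⟩
  have ha' : a +ᵥ A = A := ha
  rw [mem_coe, ← ha']
  simpa using vadd_mem_vadd_finset (a := a) h0

end Sidon

section Cosets

theorem add_mem_of_mem_closure {G : Type*} [AddCommGroup G] {R : Finset G} {A : Set G} {r a : G}
    (hRA : ∀ r ∈ R, ∀ a ∈ A, r + a ∈ R) (hr : r ∈ R) (ha : a ∈ AddSubgroup.closure A) :
    r + a ∈ R := by
  have hle : AddSubgroup.closure A ≤ AddAction.stabilizer G R := by
    rw [AddSubgroup.closure_le]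
    refine fun a ha => AddAction.mem_stabilizer_finset'.2 fun r hr => ?_
    rw [vadd_eq_add, add_comm]
    exact hRA r hr a ha
  rw [add_comm, ← vadd_eq_add]
  exact AddAction.mem_stabilizer_finset'.1 (hle ha) hr

variable {G : Type*} [AddCommGroup G] [DecidableEq G] {K : AddSubgroup G}
  {A F R S T : Finset G} {g : G}

theorem add_closure_subset_of_card_add_le (h0 : (0 : G) ∈ A)
    (hF : ∀ x, x ∈ F ↔ x ∈ AddSubgroup.closure (A : Set G)) (hRA : #(R + A) ≤ #R) :
    R + F ⊆ R := by
  have hR : R = R + A := eq_of_subset_of_card_le (subset_add_left R h0) hRA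
  refine add_subset_iff.2 fun r hr f hf =>
    add_mem_of_mem_closure (fun r hr a ha => ?_) hr ((hF f).1 hf)
  rw [hR]
  exact add_mem_add hr ha

theorem mem_vadd_finset_iff_sub_mem (hF : ∀ x, x ∈ F ↔ x ∈ K) {x : G} :
    x ∈ g +ᵥ F ↔ x - g ∈ K := by
  rw [← neg_vadd_mem_iff, hF, vadd_eq_add, neg_add_eq_sub]

theorem add_subset_vadd_finset (hF : ∀ x, x ∈ F ↔ x ∈ K) (hT : T ⊆ g +ᵥ F) (hA : A ⊆ F) :
    T + A ⊆ g +ᵥ F := by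
  refine add_subset_iff.2 fun t ht a ha => ?_
  rw [mem_vadd_finset_iff_sub_mem hF, add_sub_right_comm]
  exact K.add_mem ((mem_vadd_finset_iff_sub_mem hF).1 (hT ht)) ((hF a).1 (hA ha))

theorem disjoint_vadd_finset_sdiff_add (hF : ∀ x, x ∈ F ↔ x ∈ K) (hA : A ⊆ F) :
    Disjoint (g +ᵥ F) (S \ (g +ᵥ F) + A) := by
  rw [disjoint_right]
  intro z hz hzF
  obtain ⟨r, hr, a, ha, rfl⟩ := mem_add.1 hz
  rw [mem_vadd_finset_iff_sub_mem hF, add_sub_right_comm] at hzF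
  refine (mem_sdiff.1 hr).2 ((mem_vadd_finset_iff_sub_mem hF).2 ?_)
  exact (K.add_mem_cancel_right ((hF a).1 (hA ha))).1 hzF

theorem card_inter_add_add_card_sdiff_add (hF : ∀ x, x ∈ F ↔ x ∈ K) (hA : A ⊆ F) :
    #(S ∩ (g +ᵥ F) + A) + #(S \ (g +ᵥ F) + A) = #(S + A) := by
  have hdisj : Disjoint (S ∩ (g +ᵥ F) + A) (S \ (g +ᵥ F) + A) :=
    (disjoint_vadd_finset_sdiff_add hF hA).mono_left
      (add_subset_vadd_finset hF inter_subset_right hA)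
  rw [← card_union_of_disjoint hdisj, ← union_add, union_comm, sdiff_union_inter]

theorem card_add_le_card_add_card_sdiff (hF : ∀ x, x ∈ F ↔ x ∈ K)
    (hR : S \ (g +ᵥ F) + F ⊆ S \ (g +ᵥ F)) : #(F + S) ≤ #F + #(S \ (g +ᵥ F)) := by
  rw [add_comm F, ← card_inter_add_add_card_sdiff_add hF Subset.rfl, ← card_vadd_finset g F]
  exact Nat.add_le_add (card_le_card (add_subset_vadd_finset hF inter_subset_right Subset.rfl))
    (card_le_card hR)

theorem card_add_card_le_of_add_ne (hF : ∀ x, x ∈ F ↔ x ∈ K) (hT : T ⊆ g +ᵥ F) (hA : A ⊆ F)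
    (hne : T + A ≠ g +ᵥ F) : #T + #A ≤ #F := by
  by_contra! hlt
  refine hne ((add_subset_vadd_finset hF hT hA).antisymm fun z hz => ?_)
  have hzA : z +ᵥ -A ⊆ g +ᵥ F := by
    intro y hy
    rw [← neg_vadd_mem_iff, vadd_eq_add, mem_neg', neg_add_rev, neg_neg, neg_add_eq_sub] at hy
    rw [mem_vadd_finset_iff_sub_mem hF] at hz ⊢
    simpa using K.sub_mem hz ((hF _).1 (hA hy))
  obtain ⟨t, ht⟩ := inter_nonempty_of_card_lt_card_add_card hT hzA
    (by simpa only [card_vadd_finset, card_neg] using hlt)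
  obtain ⟨htT, htA⟩ := mem_inter.1 ht
  rw [← neg_vadd_mem_iff, vadd_eq_add, mem_neg', neg_add_rev, neg_neg] at htA
  simpa using add_mem_add htT htA

theorem two_mul_card_le_card_add (hF : ∀ x, x ∈ F ↔ x ∈ K) (h0 : (0 : G) ∈ A) (hAF : ¬A ⊆ F) :
    2 * #F ≤ #(F + A) := by
  obtain ⟨a, ha, haF⟩ := not_subset.1 hAF
  have hdisj : Disjoint F (F + {a}) := by
    rw [disjoint_right]
    intro y hy hyF
    obtain ⟨f, hf, _, ha', rfl⟩ := mem_add.1 hy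
    rw [mem_singleton.1 ha'] at hyF
    exact haF ((hF a).2 ((K.add_mem_cancel_left ((hF f).1 hf)).1 ((hF _).1 hyF)))
  have hsub : F ∪ (F + {a}) ⊆ F + A :=
    union_subset (subset_add_left F h0) (add_subset_add_left (singleton_subset_iff.2 ha))
  have hcard := card_le_card hsub
  rw [card_union_of_disjoint hdisj, card_add_singleton] at hcard
  omega

theorem card_add_add_card_le [Finite G] (hF : ∀ x, x ∈ F ↔ x ∈ K) (h : #(F + S) < Nat.card G) :
    #(F + S) + #F ≤ Nat.card G := by
  have := Fintype.ofFinite G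
  rw [Nat.card_eq_fintype_card] at h ⊢
  obtain ⟨y, hy⟩ : ∃ y, y ∉ F + S := by
    by_contra! hall
    exact h.ne (card_eq_iff_eq_univ _ |>.2 (eq_univ_of_forall hall))
  have hdisj : Disjoint (F + S) (y +ᵥ F) := by
    rw [disjoint_left]
    intro z hz hzF
    obtain ⟨f, hf, s, hs, rfl⟩ := mem_add.1 hz
    rw [mem_vadd_finset_iff_sub_mem hF] at hzF
    have hys : y - s ∈ F := by
      rw [hF, show y - s = f - (f + s - y) by abel]
      exact K.sub_mem ((hF f).1 hf) hzF
    exact hy (by simpa using add_mem_add hys hs)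
  rw [← card_vadd_finset y F, ← card_union_of_disjoint hdisj]
  exact card_le_univ _

theorem IsFragment.card_add_add_le [Finite G] {k j : ℕ} (hA : IsFragment k S A)
    (hS : S.Nonempty) (hF : ∀ x, x ∈ F ↔ x ∈ K) (hjk : j ≤ k) (hAF : #A + j ≤ #F) :
    #(A + S) + j ≤ #(F + S) := by
  by_contra! hlt
  have hsep := hA.kSeparates hS
  have hAS := hA.card_add hS
  have hkA := hsep.1
  have hFS := card_add_add_card_le (S := S) hF (by have := hsep.2; omega)
  have hsepF : KSeparates k S F := ⟨by omega, by omega⟩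
  have hkappa := hsepF.card_add_kappa_le hS
  omega

theorem IsKAtom.two_le_card_inter_vadd_finset {k : ℕ} (hA : IsKAtom k S A) (hkA : k < #A)
    (h0 : (0 : G) ∈ A) (hF : ∀ x, x ∈ F ↔ x ∈ K) (hAF : A ⊆ F) (hg : g ∈ S) :
    2 ≤ #(S ∩ (g +ᵥ F)) := by
  have hgAS : g ∈ A.erase 0 + S := by
    rw [hA.erase_add_eq ⟨g, hg⟩ hkA h0]
    exact subset_add_right S h0 hg
  obtain ⟨a, ha, s, hs, rfl⟩ := mem_add.1 hgAS
  obtain ⟨ha0, haA⟩ := mem_erase.1 ha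
  have haK : a ∈ K := (hF a).1 (hAF haA)
  refine one_lt_card.2 ⟨a + s, ?_, s, ?_, by simpa using ha0⟩
  · exact mem_inter.2 ⟨hg, (mem_vadd_finset_iff_sub_mem hF).2 (by simp)⟩
  · exact mem_inter.2 ⟨hs, (mem_vadd_finset_iff_sub_mem hF).2 (by simpa using haK)⟩

end Cosets

section Vosper

variable {G : Type*} [AddCommGroup G] [DecidableEq G] {A F S T X : Finset G} {g : G}

-- A `2`-atom `B` of `A` violating the bound has more elements than `A`. A subgroup `B ≠ G` would
-- give `2|B| ≤ |B + A|`, hence `|B| < |A|`; a Sidon set `B` gives `|B| < |A|` by symmetry.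
theorem IsSidon.card_add_card_le_of_closure_eq_top [Finite G] (hA : IsSidon A) (hA3 : 3 ≤ #A)
    (h0 : (0 : G) ∈ A) (hgen : AddSubgroup.closure (A : Set G) = ⊤) (hX : KSeparates 2 A X) :
    #X + #A ≤ #(X + A) := by
  by_contra! hlt
  have hA_ne : A.Nonempty := ⟨0, h0⟩
  have hkappa := hX.card_add_kappa_le hA_ne
  have hsep : KSeparable 2 A := ⟨X, (kSeparates_iff hA_ne).1 hX⟩
  obtain ⟨B, hB, hB0⟩ := hsep.exists_isKAtom_zero_mem two_ne_zero
  have hBA := hB.1.card_add hA_ne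
  have hBsep := hB.1.kSeparates hA_ne
  have hlt_card : #A < #B := hA.card_lt_card_of_card_add_lt hA3 hBsep.1 (by omega)
  rcases hB.isSidon_or_exists_addSubgroup hA_ne hB0 with hBSidon | ⟨H, hH⟩
  · have hgt_card : #B < #A :=
      hBSidon.card_lt_card_of_card_add_lt (by omega) (by omega) (by rw [add_comm A]; omega)
    exact hgt_card.asymm hlt_card
  · have hAB : ¬A ⊆ B := by
      intro hsub
      have htop : H = ⊤ := by
        rw [← top_le_iff, ← hgen, AddSubgroup.closure_le, ← hH]
        exact_mod_cast hsub
      have hBcard : #B = Nat.card G := by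
        rw [← Set.ncard_coe_finset, hH, htop, AddSubgroup.coe_top, Set.ncard_univ]
      have _ : #B ≤ #(B + A) := card_le_card_add_right hA_ne
      have := hBsep.2
      omega
    have htwo := two_mul_card_le_card_add (Set.ext_iff.1 hH) h0 hAB
    omega

theorem IsSidon.card_closure_le_card_add_add_one (hA : IsSidon A) (hA3 : 3 ≤ #A)
    (h0 : (0 : G) ∈ A) (hF : ∀ x, x ∈ F ↔ x ∈ AddSubgroup.closure (A : Set G))
    (hT : T ⊆ g +ᵥ F) (hT2 : 2 ≤ #T) (hTA : #(T + A) < #T + #A) : #F ≤ #(T + A) + 1 := by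
  set K := AddSubgroup.closure (A : Set G)
  have hFK : (F : Set G) = K := Set.ext hF
  have hfin : Finite K := Set.finite_coe_iff.2 (hFK ▸ F.finite_toSet)
  have hcard : Nat.card K = #F := by rw [← Set.ncard_coe_finset, hFK]; rfl
  have hinj : Function.Injective K.subtype := Subtype.val_injective
  have lift : ∀ Y : Finset G, (∀ y ∈ Y, y ∈ K) → ∃ Y' : Finset K, Y'.image K.subtype = Y := by
    intro Y hY
    refine ⟨Y.subtype (· ∈ K), ?_⟩
    ext y
    simpa using fun hy => hY y hy
  obtain ⟨A', hA'⟩ := lift A fun a ha => AddSubgroup.subset_closure ha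
  obtain ⟨T', hT'⟩ := lift (-g +ᵥ T) fun t ht => by
    rw [← neg_vadd_mem_iff, neg_neg] at ht
    simpa using (mem_vadd_finset_iff_sub_mem hF).1 (hT ht)
  have hcardA : #A' = #A := by rw [← hA', card_image_of_injective _ hinj]
  have hcardT : #T' = #T := by
    rw [← card_vadd_finset (-g) T, ← hT', card_image_of_injective _ hinj]
  have hcardTA : #(T' + A') = #(T + A) := by
    rw [← card_image_of_injective _ hinj, image_add, hA', hT', card_vadd_add]
  have hgen : AddSubgroup.closure (A' : Set K) = ⊤ := by
    apply AddSubgroup.map_injective hinj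
    rw [AddMonoidHom.map_closure, ← coe_image, hA', ← AddMonoidHom.range_eq_map,
      AddSubgroup.range_subtype]
  have h0' : (0 : K) ∈ A' := by
    rw [← hA'] at h0
    obtain ⟨z, hz, hz0⟩ := mem_image.1 h0
    rwa [← (map_eq_zero_iff K.subtype hinj).1 hz0]
  by_contra! hlt
  have hbound := (IsSidon.of_image hinj (hA'.symm ▸ hA)).card_add_card_le_of_closure_eq_top
    (X := T') (hA3.trans_eq hcardA.symm) h0' hgen ⟨by omega, by omega⟩
  omega

theorem IsSidon.card_closure_add_le (hA : IsSidon A) (hA3 : 3 ≤ #A) (h0 : (0 : G) ∈ A)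
    (hF : ∀ x, x ∈ F ↔ x ∈ AddSubgroup.closure (A : Set G)) (hAS : #(A + S) < #A + #S)
    (hS2 : ∀ g ∈ S, 2 ≤ #(S ∩ (g +ᵥ F))) : #(F + S) ≤ #(A + S) + 1 := by
  have hAF : A ⊆ F := fun a ha => (hF a).2 (AddSubgroup.subset_closure ha)
  by_cases hall : ∀ g ∈ S, S ∩ (g +ᵥ F) + A = g +ᵥ F
  · refine (card_le_card (add_subset_iff.2 fun f hf s hs => ?_)).trans (Nat.le_succ _)
    rw [add_comm A]
    refine add_subset_add_right inter_subset_left (?_ : f + s ∈ S ∩ (s +ᵥ F) + A)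
    rw [hall s hs, add_comm]
    exact vadd_mem_vadd_finset hf
  push Not at hall
  obtain ⟨g, hg, hne⟩ := hall
  set T := S ∩ (g +ᵥ F)
  set R := S \ (g +ᵥ F)
  have hT : T ⊆ g +ᵥ F := inter_subset_right
  have hsplit : #(T + A) + #(R + A) = #(A + S) := by
    rw [add_comm A, card_inter_add_add_card_sdiff_add hF hAF]
  have hTR : #T + #R = #S := card_inter_add_card_sdiff S _
  have hRA : #R ≤ #(R + A) := card_le_card_add_right ⟨0, h0⟩
  have hTA : #F ≤ #(T + A) + 1 :=
    hA.card_closure_le_card_add_add_one hA3 h0 hF hT (hS2 g hg) (by omega)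
  have hTAF : #T + #A ≤ #F := card_add_card_le_of_add_ne hF hT hAF hne
  have hRF : R + F ⊆ R := add_closure_subset_of_card_add_le h0 hF (by omega)
  have hFS : #(F + S) ≤ #F + #R := card_add_le_card_add_card_sdiff hF hRF
  omega

theorem IsKAtom.card_le_two_of_isSidon [Finite G] (hA : IsKAtom 2 S A) (hS : S.Nonempty)
    (hkappa : kappa 2 S < #S) (h0 : (0 : G) ∈ A) (hSidon : IsSidon A) : #A ≤ 2 := by
  by_contra! hA3
  have hfin := Set.toFinite (AddSubgroup.closure (A : Set G) : Set G)
  have hF : ∀ x, x ∈ hfin.toFinset ↔ x ∈ AddSubgroup.closure (A : Set G) := fun x => by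
    rw [Set.Finite.mem_toFinset, SetLike.mem_coe]
  have hAF : A ⊆ hfin.toFinset := fun a ha => (hF a).2 (AddSubgroup.subset_closure ha)
  have hAS := hA.1.card_add hS
  have hA_card : #A + 2 ≤ #hfin.toFinset := by
    have hthree := hSidon.mul_card_le hA3
    rw [show Nat.choose 3 2 = 3 from rfl] at hthree
    have hA0 : A ⊆ (0 : G) +ᵥ hfin.toFinset := by rwa [zero_vadd]
    have hAA := card_le_card (add_subset_vadd_finset hF hA0 hAF)
    rw [card_vadd_finset] at hAA
    omega
  have hle := hSidon.card_closure_add_le hA3 h0 hF (S := S) (by omega)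
    fun g hg => hA.two_le_card_inter_vadd_finset hA3 h0 hF hAF hg
  have hge := hA.1.card_add_add_le hS hF le_rfl hA_card
  omega

end Vosper

section ArithmeticProgressions

variable {G : Type*} [AddCommGroup G] [DecidableEq G] {F S : Finset G} {d s₀ : G}

theorem sub_mem_erase {r : G} (hlast : s₀ + d ∉ S) (hstep : ∀ s ∈ S, s ≠ s₀ → s + d ∈ S)
    (hcoset : ∀ s ∈ S, s - s₀ ∈ AddSubgroup.zmultiples d) (hr : r ∈ S.erase s₀) :
    s₀ - d ∈ S.erase s₀ := by
  by_contra hprev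
  have hclosed : ∀ s ∈ S.erase s₀, ∀ a ∈ ({d} : Set G), s + a ∈ S.erase s₀ := by
    rintro s hs _ rfl
    refine mem_erase.2 ⟨?_, hstep s (mem_of_mem_erase hs) (ne_of_mem_erase hs)⟩
    rintro rfl
    exact hprev (by rwa [add_sub_cancel_right])
  have hdiff : s₀ + d - r ∈ AddSubgroup.closure {d} := by
    rw [← AddSubgroup.zmultiples_eq_closure, show s₀ + d - r = d - (r - s₀) by abel]
    exact sub_mem (AddSubgroup.mem_zmultiples d) (hcoset r (mem_of_mem_erase hr))
  refine hlast (mem_of_mem_erase (a := s₀) ?_)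
  simpa using add_mem_of_mem_closure hclosed hr hdiff

theorem eq_image_range_sub_nsmul (hs₀ : s₀ ∈ S) (hlast : s₀ + d ∉ S)
    (hstep : ∀ s ∈ S, s ≠ s₀ → s + d ∈ S)
    (hcoset : ∀ s ∈ S, s - s₀ ∈ AddSubgroup.zmultiples d) :
    S = (range #S).image fun i : ℕ => s₀ + i • (-d) := by
  induction S using Finset.strongInduction generalizing s₀ with
  | H S ih =>
    obtain hempty | ⟨r, hr⟩ := (S.erase s₀).eq_empty_or_nonempty
    · obtain rfl : S = {s₀} := by rw [← insert_erase hs₀, hempty, insert_empty_eq]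
      simp
    have hprev := sub_mem_erase hlast hstep hcoset hr
    have herase := ih (S.erase s₀) (erase_ssubset hs₀) hprev (by simp)
      (fun s hs hne => mem_erase.2 ⟨fun h => hne (eq_sub_of_add_eq h),
        hstep s (mem_of_mem_erase hs) (ne_of_mem_erase hs)⟩)
      fun s hs => by
        rw [← sub_add]
        exact add_mem (hcoset s (mem_of_mem_erase hs)) (AddSubgroup.mem_zmultiples d)
    have hshift : ∀ i : ℕ, s₀ - d + i • (-d) = s₀ + (i + 1) • (-d) := fun i => by
      rw [succ_nsmul', sub_eq_add_neg, add_assoc]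
    rw [← card_erase_add_one hs₀, range_add_one', image_insert, map_eq_image, image_image,
      zero_nsmul, add_zero]
    conv_lhs => rw [← insert_erase hs₀, herase]
    simp only [hshift]
    rfl

theorem isAPWith_neg_of_sub_mem_zmultiples (hS : #(S + {0, d}) ≤ #S + 1) (hs₀ : s₀ ∈ S)
    (hlast : s₀ + d ∉ S) (hcoset : ∀ s ∈ S, s - s₀ ∈ AddSubgroup.zmultiples d) :
    IsAPWith (-d) S := by
  refine ⟨s₀, #S, rfl, eq_image_range_sub_nsmul hs₀ hlast (fun s hs hne => ?_) hcoset⟩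
  have hsub : insert (s₀ + d) S ⊆ S + {0, d} :=
    insert_subset (add_mem_add hs₀ (by simp)) (subset_add_left S (by simp))
  have hsum : insert (s₀ + d) S = S + {0, d} :=
    eq_of_subset_of_card_le hsub (by rwa [card_insert_of_notMem hlast])
  have hmem : s + d ∈ insert (s₀ + d) S := hsum ▸ add_mem_add hs (by simp)
  exact (mem_insert.1 hmem).resolve_left fun h => hne (add_right_cancel h)

theorem sdiff_vadd_add_zmultiples_subset (hF : ∀ x, x ∈ F ↔ x ∈ AddSubgroup.zmultiples d)
    (hS : #(S + {0, d}) ≤ #S + 1) (hs₀ : s₀ ∈ S) (hlast : s₀ + d ∉ S) :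
    S \ (s₀ +ᵥ F) + F ⊆ S \ (s₀ +ᵥ F) := by
  have hd : d ∈ F := (hF d).2 (AddSubgroup.mem_zmultiples d)
  have hF0 : (0 : G) ∈ F := (hF 0).2 (zero_mem _)
  have hdF : {0, d} ⊆ F := insert_subset hF0 (singleton_subset_iff.2 hd)
  have hs₀T : s₀ ∈ S ∩ (s₀ +ᵥ F) :=
    mem_inter.2 ⟨hs₀, (mem_vadd_finset_iff_sub_mem hF).2 (by simp)⟩
  have hT : #(S ∩ (s₀ +ᵥ F)) < #(S ∩ (s₀ +ᵥ F) + {0, d}) :=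
    card_lt_card ((subset_add_left _ (by simp)).ssubset_of_mem_notMem
      (add_mem_add hs₀T (by simp)) fun h => hlast (mem_of_mem_inter_left h))
  have hsplit := card_inter_add_add_card_sdiff_add (S := S) (g := s₀) hF hdF
  have hTR := card_inter_add_card_sdiff S (s₀ +ᵥ F)
  refine add_closure_subset_of_card_add_le (A := {0, d}) (by simp) (fun x => ?_) (by omega)
  rw [hF, AddSubgroup.zmultiples_eq_closure, coe_pair, AddSubgroup.closure_insert_zero]

theorem card_zmultiples_add_lt (hF : ∀ x, x ∈ F ↔ x ∈ AddSubgroup.zmultiples d)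
    (hS : #(S + {0, d}) ≤ #S + 1) (hsub : ¬S + {0, d} ⊆ S) (hAP : ¬∃ d : G, IsAPWith d S) :
    #(F + S) < #F + #S ∧ #(F + S) + 2 ≤ 2 * #S := by
  obtain ⟨s₀, hs₀, hlast⟩ : ∃ s₀ ∈ S, s₀ + d ∉ S := by
    by_contra! hall
    refine hsub (add_subset_iff.2 fun s hs a ha => ?_)
    obtain rfl | rfl := mem_insert.1 ha |>.imp_right mem_singleton.1
    · rwa [add_zero]
    · exact hall s hs
  have hR := sdiff_vadd_add_zmultiples_subset hF hS hs₀ hlast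
  have hR_ne : (S \ (s₀ +ᵥ F)).Nonempty := by
    rw [sdiff_nonempty]
    exact fun h => hAP ⟨-d, isAPWith_neg_of_sub_mem_zmultiples hS hs₀ hlast
      fun s hs => (mem_vadd_finset_iff_sub_mem hF).1 (h hs)⟩
  have hFR : #F ≤ #(S \ (s₀ +ᵥ F)) := (card_le_card_add_left hR_ne).trans (card_le_card hR)
  have hs₀F : s₀ ∈ s₀ +ᵥ F := (mem_vadd_finset_iff_sub_mem hF).2 (by simp)
  have hRS : #(S \ (s₀ +ᵥ F)) < #S :=
    card_lt_card (sdiff_subset.ssubset_of_mem_notMem hs₀ fun h => (mem_sdiff.1 h).2 hs₀F)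
  have hFS := card_add_le_card_add_card_sdiff hF hR
  omega

theorem IsFragment.zmultiples [Finite G] (hA : IsFragment 2 S {0, d})
    (hF : ∀ x, x ∈ F ↔ x ∈ AddSubgroup.zmultiples d) (hsize : 2 * #S ≤ Nat.card G + 1)
    (hkappa : kappa 2 S < #S) (hAP : ¬∃ d : G, IsAPWith d S) : IsFragment 2 S F := by
  have hS : S.Nonempty := card_pos.1 hkappa.pos
  have hAF : {0, d} ⊆ F := by simp [insert_subset_iff, hF, zero_mem]
  have hA2 : #{0, d} = 2 := card_le_two.antisymm hA.1
  have hF2 : 2 ≤ #F := hA2.symm.trans_le (card_le_card hAF)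
  have hAS : #(S + {0, d}) = 2 + kappa 2 S := by rw [add_comm, hA.card_add hS, hA2]
  have hsep : #(S + {0, d}) + 2 ≤ Nat.card G := add_comm S {0, d} ▸ (hA.kSeparates hS).2
  by_cases hsub : S + {0, d} ⊆ S
  · have hSF : S + F ⊆ S := add_closure_subset_of_card_add_le (A := {0, d}) (by simp)
      (by simpa [AddSubgroup.zmultiples_eq_closure] using hF) (card_le_card hsub)
    have hFS : #(F + S) ≤ #S := add_comm F S ▸ card_le_card hSF
    have hSA : #S ≤ #(S + {0, d}) := card_le_card (subset_add_left S (by simp))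
    have hsepF : KSeparates 2 S F := ⟨hF2, by omega⟩
    exact hsepF.isFragment hS (by omega)
  · have hlt : #S < #(S + {0, d}) := card_lt_card ⟨subset_add_left S (by simp), hsub⟩
    have hFS := card_zmultiples_add_lt hF (by omega) hsub hAP
    have hFSF := card_add_add_card_le (S := S) hF (by omega)
    have hsepF : KSeparates 2 S F := ⟨hF2, by omega⟩
    exact hsepF.isFragment hS (by omega)

end ArithmeticProgressions

theorem stmt13_general {G : Type*} [AddCommGroup G] [Finite G] [DecidableEq G] (S : Finset G)
    (hsep : KSeparable 2 S) (hsize : 2 * S.card ≤ Nat.card G + 1) (hk : kappa 2 S + 1 ≤ S.card)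
    (hnotAP : ¬∃ d : G, IsAPWith d S) :
    ∃ (H : AddSubgroup G) (HF : Finset G), (HF : Set G) = (H : Set G) ∧ IsFragment 2 S HF := by
  have hS : S.Nonempty := card_pos.1 (Nat.zero_lt_of_lt hk)
  obtain ⟨A, hA, h0⟩ := hsep.exists_isKAtom_zero_mem two_ne_zero
  obtain hSidon | ⟨H, hH⟩ := hA.isSidon_or_exists_addSubgroup hS h0
  · have hA2 : #A = 2 := (hA.card_le_two_of_isSidon hS hk h0 hSidon).antisymm hA.1.1
    obtain ⟨d, rfl⟩ : ∃ d, A = {0, d} := by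
      obtain ⟨d, hd⟩ := card_eq_one.1 ((card_erase_of_mem h0).trans (by rw [hA2]))
      exact ⟨d, by rw [← insert_erase h0, hd]⟩
    have hfin := Set.toFinite (AddSubgroup.zmultiples d : Set G)
    exact ⟨_, hfin.toFinset, hfin.coe_toFinset,
      hA.1.zmultiples (fun _ => hfin.mem_toFinset) hsize hk hnotAP⟩
  · exact ⟨H, A, hH, hA.1⟩

theorem stmt13 {G : Type*} [AddCommGroup G] [Fintype G] [DecidableEq G] (S : Finset G)
    (hgen : AddSubgroup.closure (S : Set G) = ⊤) (h0S : (0 : G) ∈ S)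
    (hsep : KSeparable 2 S)
    (hsize : 2 * S.card ≤ Nat.card G + 1)
    (hk : kappa 2 S + 1 ≤ S.card)
    (hnotAP : ¬ ∃ d : G, IsAPWith d S) :
    ∃ (H : AddSubgroup G) (HF : Finset G), (HF : Set G) = (H : Set G) ∧
      IsFragment 2 S HF :=
  stmt13_general S hsep hsize hk hnotAP
end
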